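/- Let G = (V,E) be a finite connected undirected graph with positive symmetric edge weights ω, let i ≠ j be vertices, and let U_k^{ij} denote the expected number of visits to vertex k (counting the visit at time 0) made by the random walk started at i before it first reaches j. Then for every vertex k, U_k^{ij} = (1/2)·ω(k)·(R_{ij} + R_{jk} − R_{ik}), where R_{ab} denotes the effective resistance between a and b. -/

import Mathlib

open Finset

variable {V : Type*}

/-- The total weight incident to a vertex: `ω(i) = Σ_l ω(i,l)`. -/
noncomputable def vWeight [Fintype V] (w : V → V → ℝ) (i : V) : ℝ :=
  ∑ l, w i l

/-- The total weight of the graph (each edge counted once): `ω(G)`. -/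
noncomputable def gWeight [Fintype V] (w : V → V → ℝ) : ℝ :=
  (∑ i, ∑ l, w i l) / 2

/-- Transition probabilities of the random walk on the weighted graph:
from `i`, move to `l` with probability `ω(i,l)/ω(i)`. -/
noncomputable def walkStep [Fintype V] (w : V → V → ℝ) (i l : V) : ℝ :=
  w i l / vWeight w i

/-- `w` is a system of positive symmetric edge weights on a finite connected undirected
graph: symmetric, nonnegative, zero on the diagonal (and on non-edges), and the graph
whose edges are the pairs with positive weight is connected. -/
def IsWeight [Fintype V] (w : V → V → ℝ) : Prop :=
  (∀ a b, w a b = w b a) ∧ (∀ a b, 0 ≤ w a b) ∧ (∀ a, w a a = 0) ∧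
    (∀ a b, Relation.ReflTransGen (fun x y => 0 < w x y) a b)

/-- `hitSurv p j n i` is the probability that the Markov chain with transition kernel `p`
started at `i` has not visited `j` at any of the times `0, 1, …, n`. -/
noncomputable def hitSurv {S : Type*} [Fintype S] [DecidableEq S] (p : S → S → ℝ) (j : S) :
    ℕ → S → ℝ
  | 0 => fun i => if i = j then 0 else 1
  | n + 1 => fun i => if i = j then 0 else ∑ l, p i l * hitSurv p j n l

/-- Expected hitting time of `j` from `i`: the expected number of steps for the chain
started at `i` to first reach `j`, computed as `Σ_n P(T_j > n)`. -/
noncomputable def hitTime {S : Type*} [Fintype S] [DecidableEq S] (p : S → S → ℝ)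
    (i j : S) : ℝ :=
  ∑' n : ℕ, hitSurv p j n i

/-- A unit-current potential from `i` to `j`: Kirchhoff's equations when a unit current
enters at `i` and leaves at `j`. -/
def IsUnitPotential [Fintype V] (w : V → V → ℝ) (i j : V) (φ : V → ℝ) : Prop :=
  (∀ k, k ≠ i → k ≠ j → ∑ l, w k l * (φ k - φ l) = 0) ∧
    (∑ l, w i l * (φ i - φ l) = 1) ∧
    (∑ l, w j l * (φ j - φ l) = -1)

/-- `R` is the effective-resistance matrix of the weighted graph `w`:
`R a a = 0`, and for `a ≠ b`, `R a b = V_a - V_b` for a unit-current potential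
from `a` to `b`. -/
def IsResistance [Fintype V] (w : V → V → ℝ) (R : V → V → ℝ) : Prop :=
  (∀ a, R a a = 0) ∧
    ∀ a b, a ≠ b → ∃ φ, IsUnitPotential w a b φ ∧ R a b = φ a - φ b

/-- The weight function of an unweighted graph: weight `1` on edges, `0` elsewhere. -/
noncomputable def aw (G : SimpleGraph V) [DecidableRel G.Adj] (a b : V) : ℝ :=
  if G.Adj a b then 1 else 0

/-- Probability of a given trajectory: `trajProb p i xs` is the probability that the
chain started at `i` successively visits the vertices of the list `xs`. -/
noncomputable def trajProb {S : Type*} [Fintype S] (p : S → S → ℝ) : S → List S → ℝ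
  | _, [] => 1
  | i, x :: xs => p i x * trajProb p x xs

/-- Probability that the walk started at `i` has not visited every vertex by time `n`. -/
noncomputable def notCoveredProb [Fintype V] [DecidableEq V] (p : V → V → ℝ) (n : ℕ)
    (i : V) : ℝ :=
  ∑ xs : Fin n → V, trajProb p i (List.ofFn xs) *
    (if (i :: List.ofFn xs).toFinset = Finset.univ then 0 else 1)

/-- The cover time from `i`: the expected number of steps for the walk started at `i`
to have visited every vertex, computed as `Σ_n P(T_cov > n)`. -/
noncomputable def coverTime [Fintype V] [DecidableEq V] (p : V → V → ℝ) (i : V) : ℝ :=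
  ∑' n : ℕ, notCoveredProb p n i

/-- `visitSurv p j k n i` is the probability that the chain started at `i` is at `k` at
time `n` without having visited `j` at any of the times `0, …, n`. -/
noncomputable def visitSurv [Fintype V] [DecidableEq V] (p : V → V → ℝ) (j k : V) :
    ℕ → V → ℝ
  | 0 => fun i => if i = j then 0 else if i = k then 1 else 0
  | n + 1 => fun i => if i = j then 0 else ∑ l, p i l * visitSurv p j k n l

/-- `expVisits p i j k` is the expected number of visits to `k` (counting time `0`) of
the chain started at `i` strictly before its first visit to `j`. -/
noncomputable def expVisits [Fintype V] [DecidableEq V] (p : V → V → ℝ) (i j k : V) : ℝ :=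
  ∑' n : ℕ, visitSurv p j k n i

/-- `reachBeforeAux p i j n l` is the probability that the walk started at `l` reaches `j`
within `n` steps without visiting `i` first. -/
noncomputable def reachBeforeAux [Fintype V] [DecidableEq V] (p : V → V → ℝ) (i j : V) :
    ℕ → V → ℝ
  | 0 => fun l => if l = j then 1 else 0
  | n + 1 => fun l =>
      if l = j then 1 else if l = i then 0 else ∑ m, p l m * reachBeforeAux p i j n m

/-- The probability that the walk started at `i` reaches `j` before returning to `i`:
one step from `i` to `l`, then reach `j` before `i` (monotone limit in `n`). -/
noncomputable def escapeProb [Fintype V] [DecidableEq V] (p : V → V → ℝ) (i j : V) : ℝ :=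
  ∑ l, p i l * ⨆ n, reachBeforeAux p i j n l

/-- `hitSurvSet p F n x` is the probability that the chain started at `x` has not visited
the set `F` at any of the times `0, …, n`. -/
noncomputable def hitSurvSet {S : Type*} [Fintype S] (p : S → S → ℝ) (F : S → Prop)
    [DecidablePred F] : ℕ → S → ℝ
  | 0 => fun x => if F x then 0 else 1
  | n + 1 => fun x => if F x then 0 else ∑ y, p x y * hitSurvSet p F n y

/-- Expected hitting time of the set `F` from `x`, computed as `Σ_n P(T_F > n)`. -/
noncomputable def hitTimeSet {S : Type*} [Fintype S] (p : S → S → ℝ) (F : S → Prop)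
    [DecidablePred F] (x : S) : ℝ :=
  ∑' n : ℕ, hitSurvSet p F n x

/-- The associated chain `𝒢` on pairs `(P, i)` (visited set, current vertex): from
`(P, i)` it moves to `(P ∪ {j}, j)` with probability `ω(i,j)/ω(i)`. -/
noncomputable def pairStep [Fintype V] [DecidableEq V] (w : V → V → ℝ)
    (s t : Finset V × V) : ℝ :=
  if t.1 = insert t.2 s.1 then walkStep w s.2 t.2 else 0

/-- `exitProbAux p P j n i` is the probability that the walk started at `i` leaves `P`
within `n` steps and that the first vertex visited outside `P` is `j`. -/
noncomputable def exitProbAux [Fintype V] [DecidableEq V] (p : V → V → ℝ) (P : Finset V)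
    (j : V) : ℕ → V → ℝ
  | 0 => fun i => if i ∈ P then 0 else if i = j then 1 else 0
  | n + 1 => fun i =>
      if i ∈ P then ∑ l, p i l * exitProbAux p P j n l else if i = j then 1 else 0

/-- The probability that the first vertex outside `P` visited by the walk started at `i`
is `j` (monotone limit in the number of allowed steps). -/
noncomputable def exitProb [Fintype V] [DecidableEq V] (p : V → V → ℝ) (P : Finset V)
    (i j : V) : ℝ :=
  ⨆ n, exitProbAux p P j n i

/-- The negated weighted Laplacian `Δ` of the weighted graph `w` on `Fin n`. -/
noncomputable def negLaplacian (n : ℕ) (w : Fin n → Fin n → ℝ) :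
    Matrix (Fin n) (Fin n) ℝ :=
  Matrix.of fun k l => if k = l then -(∑ m, w k m) else w k l

/-- `Δ₂`: the negated weighted Laplacian with its first row replaced by the first row of
the identity matrix. -/
noncomputable def delta2 (n : ℕ) (hn : 0 < n) (w : Fin n → Fin n → ℝ) :
    Matrix (Fin n) (Fin n) ℝ :=
  (negLaplacian n w).updateRow ⟨0, hn⟩ (fun l => if l = ⟨0, hn⟩ then 1 else 0)

/-- The weight function obtained from `w` by adding weight `u` on the edge `{a, b}`. -/
noncomputable def addEdge [DecidableEq V] (w : V → V → ℝ) (a b : V) (u : ℝ)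
    (x y : V) : ℝ :=
  w x y + (if (x = a ∧ y = b) ∨ (x = b ∧ y = a) then u else 0)

/-- The weighted Laplacian of `f` at `x`. -/
noncomputable def weightedLap [Fintype V] (w : V → V → ℝ) (f : V → ℝ) (x : V) : ℝ :=
  ∑ l, w x l * (f x - f l)

theorem weightedLap_eq [Fintype V] (w : V → V → ℝ) (f : V → ℝ) (x : V) :
    weightedLap w f x = vWeight w x * f x - ∑ l, w x l * f l := by
  simp only [weightedLap, vWeight, mul_sub, Finset.sum_sub_distrib, Finset.sum_mul]

theorem weightedLap_sub [Fintype V] (w : V → V → ℝ) (f g : V → ℝ) (x : V) :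
    weightedLap w (fun y => f y - g y) x = weightedLap w f x - weightedLap w g x := by
  simp only [weightedLap, ← Finset.sum_sub_distrib]
  exact Finset.sum_congr rfl fun l _ => by ring

/-- The weighted Laplacian is self-adjoint. -/
theorem sum_mul_weightedLap_comm [Fintype V] {w : V → V → ℝ} (hw : IsWeight w)
    (f g : V → ℝ) :
    ∑ x, f x * weightedLap w g x = ∑ x, g x * weightedLap w f x := by
  have hswap : ∑ x, ∑ l, f x * (w x l * g l) = ∑ x, ∑ l, g x * (w x l * f l) := by
    rw [Finset.sum_comm]
    refine Finset.sum_congr rfl fun x _ => Finset.sum_congr rfl fun l _ => ?_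
    rw [hw.1 l x]
    ring
  simp only [weightedLap_eq, mul_sub, Finset.sum_sub_distrib, Finset.mul_sum, hswap]
  congr 1
  exact Finset.sum_congr rfl fun x _ => by ring

/-- Minimum principle: a function superharmonic off `j` attains its minimum at `j`. -/
theorem le_of_weightedLap_nonneg [Fintype V] {w : V → V → ℝ} (hw : IsWeight w)
    {j : V} {f : V → ℝ} (hf : ∀ x, x ≠ j → 0 ≤ weightedLap w f x) (x : V) : f j ≤ f x := by
  obtain ⟨m, -, hm⟩ := Finset.exists_min_image Finset.univ f ⟨j, Finset.mem_univ j⟩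
  have hpath : ∀ y, Relation.ReflTransGen (fun a b => 0 < w a b) m y →
      f y = f m ∨ f j = f m := by
    intro y hy
    induction hy with
    | refl => exact Or.inl rfl
    | @tail b c _ hbc ih =>
      rcases ih with hb | hj
      · by_cases hbj : b = j
        · exact Or.inr (hbj ▸ hb)
        · left
          have hle : ∀ l ∈ Finset.univ, w b l * (f b - f l) ≤ 0 := fun l hl =>
            mul_nonpos_of_nonneg_of_nonpos (hw.2.1 b l) (by linarith [hm l hl])
          have hzero := (Finset.sum_eq_zero_iff_of_nonpos hle).1
            (le_antisymm (Finset.sum_nonpos hle) (hf b hbj)) c (Finset.mem_univ c)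
          rcases mul_eq_zero.1 hzero with h | h
          · exact absurd h hbc.ne'
          · linarith
      · exact Or.inr hj
  have hj : f j = f m := (hpath j (hw.2.2.2 m j)).elim id id
  exact hj ▸ hm x (Finset.mem_univ x)

/-- Two functions with the same Laplacian off `j` differ by a constant. -/
theorem sub_eq_sub_of_weightedLap_eq [Fintype V] {w : V → V → ℝ} (hw : IsWeight w)
    {j : V} {f g : V → ℝ} (h : ∀ x, x ≠ j → weightedLap w f x = weightedLap w g x) (x : V) :
    f x - f j = g x - g j := by
  have h₁ := le_of_weightedLap_nonneg (f := fun y => f y - g y) hw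
    (fun y hy => by rw [weightedLap_sub, h y hy, sub_self]) x
  have h₂ := le_of_weightedLap_nonneg (f := fun y => g y - f y) hw
    (fun y hy => by rw [weightedLap_sub, h y hy, sub_self]) x
  linarith

theorem vWeight_pos [Fintype V] {w : V → V → ℝ} (hw : IsWeight w) {x j : V} (hx : x ≠ j) :
    0 < vWeight w x := by
  rcases Relation.ReflTransGen.cases_head (hw.2.2.2 x j) with h | ⟨y, hy, -⟩
  · exact absurd h hx
  · exact Finset.sum_pos' (fun l _ => hw.2.1 x l) ⟨y, Finset.mem_univ y, hy⟩

theorem sum_walkStep_mul [Fintype V] {w : V → V → ℝ} {x : V} (hx : 0 < vWeight w x)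
    (f : V → ℝ) :
    ∑ l, walkStep w x l * f l = f x - weightedLap w f x / vWeight w x := by
  have hsum : ∑ l, walkStep w x l * f l = (∑ l, w x l * f l) / vWeight w x := by
    rw [Finset.sum_div]
    exact Finset.sum_congr rfl fun l _ => by rw [walkStep]; ring
  rw [hsum, weightedLap_eq]
  field_simp
  ring

/-- A resistance is the potential difference of a potential with Laplacian `δ_a - δ_b`. -/
theorem IsResistance.exists_potential [Fintype V] [DecidableEq V] {w R : V → V → ℝ}
    (hR : IsResistance w R) (a b : V) :
    ∃ φ : V → ℝ, (∀ x, weightedLap w φ x = (if x = a then 1 else 0) - (if x = b then 1 else 0)) ∧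
      R a b = φ a - φ b := by
  by_cases hab : a = b
  · subst hab
    exact ⟨fun _ => 0, fun x => by simp [weightedLap], by simp [hR.1 a]⟩
  · obtain ⟨φ, ⟨h, ha, hb⟩, hφ⟩ := hR.2 a b hab
    refine ⟨φ, fun x => ?_, hφ⟩
    by_cases hxa : x = a
    · subst hxa
      simpa [hab, weightedLap] using ha
    · by_cases hxb : x = b
      · subst hxb
        simpa [hxa, weightedLap] using hb
      · simpa [hxa, hxb, weightedLap] using h x hxa hxb

theorem IsResistance.eq_sub_of_potential [Fintype V] [DecidableEq V] {w R : V → V → ℝ}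
    (hw : IsWeight w) (hR : IsResistance w R) {a b : V} {φ : V → ℝ}
    (hφ : ∀ x, weightedLap w φ x = (if x = a then 1 else 0) - (if x = b then 1 else 0)) :
    R a b = φ a - φ b := by
  obtain ⟨ψ, hψ, h⟩ := hR.exists_potential a b
  rw [h]
  exact sub_eq_sub_of_weightedLap_eq hw (fun x _ => by rw [hψ, hφ]) a

/-- The potential of a unit current from `k` to `j`, grounded at `j`, in terms of resistances. -/
theorem IsResistance.potential_sub_eq [Fintype V] [DecidableEq V] {w R : V → V → ℝ}
    (hw : IsWeight w) (hR : IsResistance w R) {j k : V} {φ : V → ℝ}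
    (hφ : ∀ x, weightedLap w φ x = (if x = k then 1 else 0) - (if x = j then 1 else 0)) (i : V) :
    φ i - φ j = (1 / 2) * (R i j + R j k - R i k) := by
  obtain ⟨ψ, hψ, hij⟩ := hR.exists_potential i j
  have hik : R i k = (ψ i - φ i) - (ψ k - φ k) :=
    hR.eq_sub_of_potential (φ := fun x => ψ x - φ x) hw fun x => by
      rw [weightedLap_sub, hψ, hφ]; ring
  have hjk : R j k = (0 - φ j) - (0 - φ k) :=
    hR.eq_sub_of_potential (φ := fun x => 0 - φ x) hw fun x => by
      rw [weightedLap_sub w (fun _ => 0) φ, hφ]; simp [weightedLap]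
  have hrec := sum_mul_weightedLap_comm hw φ ψ
  simp [hφ, hψ, mul_sub] at hrec
  rw [hij, hik, hjk]
  linarith

theorem visitSurv_nonneg [Fintype V] [DecidableEq V] {p : V → V → ℝ} (hp : ∀ a b, 0 ≤ p a b)
    (j k : V) (n : ℕ) (x : V) : 0 ≤ visitSurv p j k n x := by
  induction n generalizing x with
  | zero => unfold visitSurv; split_ifs <;> norm_num
  | succ n ih =>
    unfold visitSurv
    split_ifs
    · exact le_rfl
    · exact Finset.sum_nonneg fun l _ => mul_nonneg (hp x l) (ih l)

theorem visitSurv_self [Fintype V] [DecidableEq V] (p : V → V → ℝ) (j k : V) (n : ℕ) :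
    visitSurv p j k n j = 0 := by
  cases n <;> simp [visitSurv]

theorem expVisits_self [Fintype V] [DecidableEq V] (p : V → V → ℝ) (j k : V) :
    expVisits p j j k = 0 := by
  simp [expVisits, visitSurv_self]

theorem visitSurv_target [Fintype V] [DecidableEq V] (p : V → V → ℝ) (j : V) (n : ℕ) (x : V) :
    visitSurv p j j n x = 0 := by
  induction n generalizing x with
  | zero => simp +contextual [visitSurv]
  | succ n ih => simp [visitSurv, ih]

theorem expVisits_target [Fintype V] [DecidableEq V] (p : V → V → ℝ) (i j : V) :
    expVisits p i j j = 0 := by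
  simp [expVisits, visitSurv_target]

/-- A nonnegative supersolution of the first-step equations dominates the truncated
expected numbers of visits. -/
theorem sum_range_visitSurv_le [Fintype V] [DecidableEq V] {p : V → V → ℝ}
    (hp : ∀ a b, 0 ≤ p a b) {j k : V} {h : V → ℝ} (h_nonneg : ∀ x, 0 ≤ h x)
    (h_step : ∀ x, x ≠ j → (if x = k then 1 else 0) + ∑ l, p x l * h l ≤ h x) (n : ℕ) (x : V) :
    ∑ m ∈ Finset.range n, visitSurv p j k m x ≤ h x := by
  induction n generalizing x with
  | zero => simpa using h_nonneg x
  | succ n ih =>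
    by_cases hx : x = j
    · subst hx
      simpa [visitSurv_self] using h_nonneg x
    · rw [Finset.sum_range_succ']
      have hsum : ∑ m ∈ Finset.range n, visitSurv p j k (m + 1) x =
          ∑ l, p x l * ∑ m ∈ Finset.range n, visitSurv p j k m l := by
        simp only [visitSurv, hx, if_false, Finset.mul_sum]
        exact Finset.sum_comm
      have hle : ∑ l, p x l * ∑ m ∈ Finset.range n, visitSurv p j k m l ≤ ∑ l, p x l * h l :=
        Finset.sum_le_sum fun l _ => mul_le_mul_of_nonneg_left (ih l) (hp x l)
      have hzero : visitSurv p j k 0 x = if x = k then 1 else 0 := by simp [visitSurv, hx]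
      rw [hsum, hzero]
      linarith [h_step x hx]

/-- First-step analysis for the expected number of visits. -/
theorem expVisits_eq_add_sum [Fintype V] [DecidableEq V] {p : V → V → ℝ} {j k : V}
    (hs : ∀ x, Summable fun n => visitSurv p j k n x) {x : V} (hx : x ≠ j) :
    expVisits p x j k = (if x = k then 1 else 0) + ∑ l, p x l * expVisits p l j k := by
  have hzero : visitSurv p j k 0 x = if x = k then 1 else 0 := by simp [visitSurv, hx]
  unfold expVisits
  rw [(hs x).tsum_eq_zero_add, hzero]
  simp only [visitSurv, hx, if_false, ← tsum_mul_left]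
  rw [Summable.tsum_finsetSum fun l _ => (hs l).mul_left (p x l)]

/-- The expected numbers of visits to `k` before `j` form the potential of a current `ω(k)`
from `k` to `j`, grounded at `j`. -/
theorem expVisits_eq_vWeight_mul_potential [Fintype V] [DecidableEq V] {w : V → V → ℝ}
    (hw : IsWeight w) {j k : V} {φ : V → ℝ} (hkj : k ≠ j)
    (hφ : ∀ x, weightedLap w φ x = (if x = k then 1 else 0) - (if x = j then 1 else 0)) (i : V) :
    expVisits (walkStep w) i j k = vWeight w k * (φ i - φ j) := by
  have hp : ∀ a b, 0 ≤ walkStep w a b := fun a b =>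
    div_nonneg (hw.2.1 a b) (Finset.sum_nonneg fun l _ => hw.2.1 a l)
  have hlap : ∀ x, x ≠ j → weightedLap w (fun y => vWeight w k * (φ y - φ j)) x =
      vWeight w x * (if x = k then 1 else 0) := by
    intro x hx
    have hmul : weightedLap w (fun y => vWeight w k * (φ y - φ j)) x =
        vWeight w k * weightedLap w φ x := by
      simp only [weightedLap, Finset.mul_sum]
      exact Finset.sum_congr rfl fun l _ => by ring
    rw [hmul, hφ]
    by_cases hxk : x = k <;> simp [hxk, hx, hkj]
  have h_nonneg : ∀ x, 0 ≤ vWeight w k * (φ x - φ j) := fun x =>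
    mul_nonneg (vWeight_pos hw hkj).le <| sub_nonneg.2 <|
      le_of_weightedLap_nonneg hw (fun y hy => by rw [hφ]; split_ifs <;> simp_all) x
  have h_step : ∀ x, x ≠ j → (if x = k then 1 else 0) +
      ∑ l, walkStep w x l * (vWeight w k * (φ l - φ j)) ≤ vWeight w k * (φ x - φ j) := by
    intro x hx
    have hpos := vWeight_pos hw hx
    rw [sum_walkStep_mul hpos fun y => vWeight w k * (φ y - φ j), hlap x hx,
      mul_div_cancel_left₀ _ hpos.ne']
    linarith
  have hs : ∀ x, Summable fun n => visitSurv (walkStep w) j k n x := fun x =>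
    summable_of_sum_range_le (fun n => visitSurv_nonneg hp j k n x)
      fun n => sum_range_visitSurv_le hp h_nonneg h_step n x
  have hlap' : ∀ x, x ≠ j → weightedLap w (fun y => expVisits (walkStep w) y j k) x =
      weightedLap w (fun y => vWeight w k * (φ y - φ j)) x := by
    intro x hx
    have hpos := vWeight_pos hw hx
    have hfirst := expVisits_eq_add_sum hs hx
    rw [sum_walkStep_mul hpos fun y => expVisits (walkStep w) y j k] at hfirst
    rw [hlap x hx, mul_comm, ← div_eq_iff hpos.ne']
    linarith
  simpa [expVisits_self] using sub_eq_sub_of_weightedLap_eq hw hlap' i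

/-- The expected number of visits to `k` before hitting `j`, for the
walk started at `i`, is `U_k^{ij} = (1/2)·ω(k)·(R_{ij} + R_{jk} − R_{ik})`. -/
theorem visits_resistance_formula
    {V : Type*} [Fintype V] [DecidableEq V] (w : V → V → ℝ) (hw : IsWeight w)
    (R : V → V → ℝ) (hR : IsResistance w R) (i j : V) (hij : i ≠ j) (k : V) :
    expVisits (walkStep w) i j k =
      (1 / 2) * vWeight w k * (R i j + R j k - R i k) := by
  by_cases hkj : k = j
  · subst hkj
    rw [expVisits_target, hR.1 k]
    ring
  · obtain ⟨φ, hφ, -⟩ := hR.exists_potential k j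
    rw [expVisits_eq_vWeight_mul_potential hw hkj hφ i, hR.potential_sub_eq hw hφ i]
    ring
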